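/- arXiv:1204.1106 — 2 statements merged into one kernel-verified Lean document; each statement's English description precedes it below -/
import Mathlib

section
/- Let E be a real Hilbert space, let f : E → ℝ ∪ {+∞} be convex, lower semicontinuous, and proper, let ρ > 0, and let x ∈ E. Then the function y ↦ f(y) + (ρ/2)‖x − y‖² attains its infimum at a unique point of E; i.e., the proximal point prox_{f,ρ}(x) exists and is unique. -/
/-!
The objective `G y = f y + (ρ/2)‖x − y‖²` is strongly convex: by the parallelogram law, if `G y ≤ r`
and `G z ≤ s`, then `G` at the midpoint is at most `(r + s)/2 − (ρ/8)‖y − z‖²` (`midpoint_bound`).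

Let `m` be the infimum of the real upper bounds of values of `G`. It is finite because `f` has a
lower bound of the form `f y ≥ A − C‖y − x₀‖` (`exists_cone_minorant`), which the quadratic term
dominates. Strong convexity forces a minimizing sequence to be Cauchy, and lower semicontinuity gives
`G ≤ m` at its limit. Two points where `G ≤ m` coincide, again by strong convexity.

Inequalities `G y ≤ r` with `r` real are handled in the form `f y ≤ r − (ρ/2)‖x − y‖²`, whose right
side is real; this avoids extended-real arithmetic.
-/

theorem objective_le_iff (a : EReal) (q r : ℝ) :
    a + (q : EReal) ≤ (r : EReal) ↔ a ≤ ((r - q : ℝ) : EReal) := by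
  induction a with
  | bot => simp
  | top => simp [-EReal.coe_sub]
  | coe a => norm_cast; constructor <;> intro h <;> linarith

/-- Convexity of an extended-real function, read on real upper bounds of its values. -/
theorem convex_bound {E : Type*} [AddCommGroup E] [Module ℝ E] {f : E → EReal}
    (hconv : ∀ x y : E, ∀ a b : ℝ, 0 ≤ a → 0 ≤ b → a + b = 1 →
      f (a • x + b • y) ≤ (a : EReal) * f x + (b : EReal) * f y)
    {y z : E} {r s a b : ℝ} (hy : f y ≤ (r : EReal)) (hz : f z ≤ (s : EReal))
    (ha : 0 ≤ a) (hb : 0 ≤ b) (hab : a + b = 1) :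
    f (a • y + b • z) ≤ ((a * r + b * s : ℝ) : EReal) := by
  refine (hconv y z a b ha hb hab).trans ?_
  push_cast
  exact add_le_add (mul_le_mul_of_nonneg_left hy (by exact_mod_cast ha))
    (mul_le_mul_of_nonneg_left hz (by exact_mod_cast hb))

/-- Strong convexity of `y ↦ f y + (ρ/2)‖x − y‖²` at midpoints. -/
theorem midpoint_bound {E : Type*} [NormedAddCommGroup E] [InnerProductSpace ℝ E] {f : E → EReal}
    (hconv : ∀ x y : E, ∀ a b : ℝ, 0 ≤ a → 0 ≤ b → a + b = 1 →
      f (a • x + b • y) ≤ (a : EReal) * f x + (b : EReal) * f y)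
    {ρ : ℝ} {x y z : E} {r s : ℝ}
    (hy : f y ≤ ((r - ρ / 2 * ‖x - y‖ ^ 2 : ℝ) : EReal))
    (hz : f z ≤ ((s - ρ / 2 * ‖x - z‖ ^ 2 : ℝ) : EReal)) :
    f ((1 / 2 : ℝ) • y + (1 / 2 : ℝ) • z) ≤
      (((r + s) / 2 - ρ / 8 * ‖y - z‖ ^ 2
        - ρ / 2 * ‖x - ((1 / 2 : ℝ) • y + (1 / 2 : ℝ) • z)‖ ^ 2 : ℝ) : EReal) := by
  have h := convex_bound hconv hy hz (a := 1 / 2) (b := 1 / 2)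
    (by norm_num) (by norm_num) (by norm_num)
  refine h.trans (le_of_eq ?_)
  congr 1
  have e1 : x - ((1 / 2 : ℝ) • y + (1 / 2 : ℝ) • z) = (1 / 2 : ℝ) • ((x - y) + (x - z)) := by
    module
  have e2 : y - z = (x - z) - (x - y) := by abel
  have p := parallelogram_law_with_norm ℝ (x - z) (x - y)
  rw [← e2, add_comm (x - z)] at p
  rw [e1, norm_smul, mul_pow]
  norm_num
  linear_combination (ρ / 8) * p

/-- A proper convex lower semicontinuous function decreases, from a point `x₀` of its domain, at
most linearly: it is bounded below on a ball around `x₀`, and the bound propagates to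
any `y` outside by convexity on the segment `[x₀, y]`. -/
theorem exists_cone_minorant {E : Type*} [NormedAddCommGroup E] [InnerProductSpace ℝ E]
    {f : E → EReal}
    (hbot : ∀ x, f x ≠ ⊥)
    (hconv : ∀ x y : E, ∀ a b : ℝ, 0 ≤ a → 0 ≤ b → a + b = 1 →
      f (a • x + b • y) ≤ (a : EReal) * f x + (b : EReal) * f y)
    (hlsc : LowerSemicontinuous f) (hproper : ∃ x, f x ≠ ⊤) :
    ∃ (x₀ : E) (A C : ℝ), 0 ≤ C ∧
      ∀ (y : E) (r : ℝ), f y ≤ (r : EReal) → A - C * ‖y - x₀‖ ≤ r := by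
  obtain ⟨x₀, hx₀⟩ := hproper
  obtain ⟨A, hA⟩ : ∃ A : ℝ, f x₀ = (A : EReal) :=
    ⟨(f x₀).toReal, (EReal.coe_toReal hx₀ (hbot x₀)).symm⟩
  have hlt : ((A - 1 : ℝ) : EReal) < f x₀ := by
    rw [hA]; exact_mod_cast sub_one_lt A
  obtain ⟨δ, hδ, hball⟩ := Metric.eventually_nhds_iff.1 (hlsc x₀ _ hlt)
  refine ⟨x₀, A - 1, 2 / δ, by positivity, fun y r hr => ?_⟩
  have hC : 0 ≤ 2 / δ * ‖y - x₀‖ := by positivity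
  rcases lt_or_ge (dist y x₀) δ with h | h
  · have h1 := (hball h).trans_le hr
    have h2 : A - 1 < r := by exact_mod_cast h1
    linarith
  · rw [dist_eq_norm] at h
    have hn : 0 < ‖y - x₀‖ := hδ.trans_le h
    -- The point of the segment at distance `δ / 2` from `x₀`.
    set t : ℝ := δ / 2 / ‖y - x₀‖ with ht
    have ht0 : 0 < t := by positivity
    have htn : t * ‖y - x₀‖ = δ / 2 := by rw [ht]; field_simp
    have ht1 : t ≤ 1 := by rw [ht, div_le_one hn]; linarith
    have hc := convex_bound hconv hA.le hr (a := 1 - t) (b := t) (by linarith) ht0.le (by ring)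
    have hd : dist ((1 - t) • x₀ + t • y) x₀ < δ := by
      have e : (1 - t) • x₀ + t • y - x₀ = t • (y - x₀) := by module
      rw [dist_eq_norm, e, norm_smul, Real.norm_of_nonneg ht0.le, htn]
      linarith
    have h1 := (hball hd).trans_le hc
    have h2 : A - 1 < (1 - t) * A + t * r := by exact_mod_cast h1
    have h3 : t * (2 / δ * ‖y - x₀‖) = 1 := by
      rw [mul_left_comm, htn]; field_simp
    have h4 : 0 < t * (r - (A - 2 / δ * ‖y - x₀‖)) := by
      rw [mul_sub, mul_sub, h3]; linarith
    have h5 := (mul_pos_iff_of_pos_left ht0).1 h4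
    linarith

/-- For a convex, lower semicontinuous, proper function `f : E → ℝ ∪ {+∞}` on a real
Hilbert space `E`, `ρ > 0` and `x ∈ E`, the function `y ↦ f(y) + (ρ/2)‖x − y‖²` attains
its infimum at a unique point of `E`: the proximal point `prox_{f,ρ}(x)` exists and is
unique. -/
theorem stmt2 {E : Type*} [NormedAddCommGroup E] [InnerProductSpace ℝ E] [CompleteSpace E]
    (f : E → EReal)
    (hbot : ∀ x, f x ≠ ⊥)
    (hconv : ∀ x y : E, ∀ a b : ℝ, 0 ≤ a → 0 ≤ b → a + b = 1 →
      f (a • x + b • y) ≤ (a : EReal) * f x + (b : EReal) * f y)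
    (hlsc : LowerSemicontinuous f)
    (hproper : ∃ x, f x ≠ ⊤)
    (ρ : ℝ) (hρ : 0 < ρ) (x : E) :
    ∃! y : E, ∀ z : E,
      f y + (((ρ / 2) * ‖x - y‖ ^ 2 : ℝ) : EReal) ≤
        f z + (((ρ / 2) * ‖x - z‖ ^ 2 : ℝ) : EReal) := by
  obtain ⟨x₀, A, C, hC, hmin⟩ := exists_cone_minorant hbot hconv hlsc hproper
  -- The real upper bounds of values of the objective.
  set S : Set ℝ := {r | ∃ y, f y ≤ ((r - ρ / 2 * ‖x - y‖ ^ 2 : ℝ) : EReal)} with hS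
  have hne : S.Nonempty := by
    obtain ⟨p, hp⟩ := hproper
    refine ⟨(f p).toReal + ρ / 2 * ‖x - p‖ ^ 2, p, ?_⟩
    rw [add_sub_cancel_right]
    exact EReal.le_coe_toReal hp
  have hbdd : BddBelow S := by
    -- The bound is `min_t (ρ/2) t² - C t = -C²/(2ρ)`, with `t = ‖x - y‖`.
    refine ⟨A - C * ‖x - x₀‖ - C ^ 2 / (2 * ρ), ?_⟩
    rintro r ⟨y, hy⟩
    have h1 := hmin y _ hy
    have h2 : ‖y - x₀‖ ≤ ‖x - y‖ + ‖x - x₀‖ := by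
      rw [norm_sub_rev x y]; exact norm_sub_le_norm_sub_add_norm_sub y x x₀
    have h3 := mul_le_mul_of_nonneg_left h2 hC
    have h4 : ρ / 2 * ‖x - y‖ ^ 2 - C * ‖x - y‖ + C ^ 2 / (2 * ρ)
        = (ρ * ‖x - y‖ - C) ^ 2 / (2 * ρ) := by
      field_simp
      ring
    have h5 : 0 ≤ (ρ * ‖x - y‖ - C) ^ 2 / (2 * ρ) := by positivity
    linarith
  set m : ℝ := sInf S with hm
  have hmS : ∀ r ∈ S, m ≤ r := fun r hr => csInf_le hbdd hr
  have hclose : ∀ {y z : E} {r s : ℝ}, f y ≤ ((r - ρ / 2 * ‖x - y‖ ^ 2 : ℝ) : EReal) →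
      f z ≤ ((s - ρ / 2 * ‖x - z‖ ^ 2 : ℝ) : EReal) →
      ρ / 8 * ‖y - z‖ ^ 2 ≤ (r + s) / 2 - m := by
    intro y z r s hy hz
    have := hmS _ ⟨_, midpoint_bound hconv hy hz⟩
    linarith
  -- A point is a minimizer exactly when the objective is at most `m` there.
  have hiff : ∀ y : E, (∀ z : E, f y + (((ρ / 2) * ‖x - y‖ ^ 2 : ℝ) : EReal) ≤
        f z + (((ρ / 2) * ‖x - z‖ ^ 2 : ℝ) : EReal)) ↔
      f y + (((ρ / 2) * ‖x - y‖ ^ 2 : ℝ) : EReal) ≤ (m : EReal) := by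
    intro y
    constructor
    · intro h
      refine EReal.le_of_forall_lt_iff_le.1 fun c hc => ?_
      obtain ⟨r, ⟨z, hz⟩, hrc⟩ := exists_lt_of_csInf_lt hne (EReal.coe_lt_coe_iff.1 hc)
      exact ((h z).trans ((objective_le_iff _ _ _).2 hz)).trans (by exact_mod_cast hrc.le)
    · intro h z
      refine h.trans (EReal.le_of_forall_lt_iff_le.1 fun c hc => ?_)
      exact_mod_cast hmS c ⟨z, (objective_le_iff _ _ _).1 hc.le⟩
  have hG : LowerSemicontinuous
      (fun y => f y + (((ρ / 2) * ‖x - y‖ ^ 2 : ℝ) : EReal)) := by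
    refine LowerSemicontinuous.add' hlsc ?_ fun y => ?_
    · apply Continuous.lowerSemicontinuous
      exact continuous_coe_real_ereal.comp (by fun_prop)
    · exact EReal.continuousAt_add (Or.inr (EReal.coe_ne_bot _)) (Or.inr (EReal.coe_ne_top _))
  have hseq : ∀ n : ℕ, ∃ y, f y ≤ ((m + 1 / ((n : ℝ) + 1) - ρ / 2 * ‖x - y‖ ^ 2 : ℝ) : EReal) := by
    intro n
    have hn : m < m + 1 / ((n : ℝ) + 1) := lt_add_of_pos_right _ Nat.one_div_pos_of_nat
    obtain ⟨r, ⟨z, hz⟩, hrc⟩ := exists_lt_of_csInf_lt hne hn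
    exact ⟨z, hz.trans (by exact_mod_cast sub_le_sub_right hrc.le _)⟩
  choose u hu using hseq
  have hcauchy : CauchySeq u := by
    refine Metric.cauchySeq_iff'.2 fun ε hε => ?_
    obtain ⟨N, hN⟩ := exists_nat_one_div_lt (show 0 < ρ / 8 * ε ^ 2 by positivity)
    refine ⟨N, fun n hn => ?_⟩
    have h1 := hclose (hu n) (hu N)
    have h2 : 1 / ((n : ℝ) + 1) ≤ 1 / ((N : ℝ) + 1) := Nat.one_div_le_one_div hn
    have h3 : ρ / 8 * ‖u n - u N‖ ^ 2 < ρ / 8 * ε ^ 2 := by linarith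
    rw [dist_eq_norm]
    exact lt_of_pow_lt_pow_left₀ 2 hε.le (lt_of_mul_lt_mul_left h3 (by positivity))
  obtain ⟨y, hy⟩ := cauchySeq_tendsto_of_complete hcauchy
  have hym : f y + (((ρ / 2) * ‖x - y‖ ^ 2 : ℝ) : EReal) ≤ (m : EReal) := by
    refine EReal.le_of_forall_lt_iff_le.1 fun c hc => ?_
    -- The sublevel set at height `c > m` is closed and eventually contains the sequence.
    refine (hG.isClosed_preimage (c : EReal)).mem_of_tendsto hy ?_
    obtain ⟨N, hN⟩ := exists_nat_one_div_lt (sub_pos.2 (EReal.coe_lt_coe_iff.1 hc))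
    filter_upwards [Filter.eventually_ge_atTop N] with n hn
    have h2 : 1 / ((n : ℝ) + 1) ≤ 1 / ((N : ℝ) + 1) := Nat.one_div_le_one_div hn
    have h3 : m + 1 / ((n : ℝ) + 1) ≤ c := by linarith
    exact ((objective_le_iff _ _ _).2 (hu n)).trans (EReal.coe_le_coe_iff.2 h3)
  refine ⟨y, (hiff y).2 hym, fun z hz => ?_⟩
  have h1 := hclose ((objective_le_iff _ _ _).1 ((hiff z).1 hz)) ((objective_le_iff _ _ _).1 hym)
  have h2 : ‖z - y‖ ^ 2 ≤ 0 := by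
    have : ρ / 8 * ‖z - y‖ ^ 2 ≤ ρ / 8 * 0 := by linarith
    exact le_of_mul_le_mul_left this (by positivity)
  exact sub_eq_zero.1 (norm_eq_zero.1 (pow_eq_zero_iff two_ne_zero |>.1 (le_antisymm h2 (sq_nonneg _))))
end

section
/- Suppose u^0 : 𝒯 → ℝ^T is constant on each net and the sequences p^k, z^k, u^k follow the ADMM iteration for the OPSP, where z^{k+1}_n := u^k_n + p^{k+1}_n − ū^k_n − p̄^{k+1}_n and u^{k+1}_n := u^k_n + p^{k+1}_n − z^{k+1}_n for each net n. Then for every k ≥ 1, z^k = p^k − p̄^k, and consequently the ADMM dual residual satisfies ρ(z^k − z^{k−1}) = ρ((p^k − p̄^k) − (p^{k−1} − p̄^{k−1})) for every k ≥ 2. -/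
/-!
Substituting the `z`-update into the `u`-update gives `u^{k+1} = ū^k + p̄^{k+1}`, a sum of per-net
averages, hence constant on each net. As `u^0` is also constant on each net, every `u^k` equals its
own average (`netAvg_of_const`), so `u^k` and `ū^k` cancel in the `z`-update and leave
`z^{k+1} = p^{k+1} − p̄^{k+1}`. The dual residual formula follows by substitution.
-/

open Finset

/-- Per-net average: `x̄ t = (1/|n|) ∑_{t'∈n} x t'`, where `n` is the net of `t`
(nets are the fibers of `net : 𝒯 → N`). -/
noncomputable def netAvg {𝒯 N : Type*} [Fintype 𝒯] [DecidableEq N] {T : ℕ}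
    (net : 𝒯 → N) (x : 𝒯 → Fin T → ℝ) (t : 𝒯) : Fin T → ℝ :=
  (((univ.filter fun t' => net t' = net t).card : ℝ)⁻¹) •
    ∑ t' ∈ univ.filter fun t' => net t' = net t, x t'

theorem netAvg_congr {𝒯 N : Type*} [Fintype 𝒯] [DecidableEq N] {T : ℕ}
    (net : 𝒯 → N) (x : 𝒯 → Fin T → ℝ) {t t' : 𝒯} (h : net t = net t') :
    netAvg net x t = netAvg net x t' := by
  simp only [netAvg, h]

theorem netAvg_of_const {𝒯 N : Type*} [Fintype 𝒯] [DecidableEq N] {T : ℕ}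
    (net : 𝒯 → N) (x : 𝒯 → Fin T → ℝ) (hx : ∀ t t', net t = net t' → x t = x t') (t : 𝒯) :
    netAvg net x t = x t := by
  have hsum : ∑ t' ∈ univ.filter (fun t' => net t' = net t), x t' =
      ((univ.filter fun t' => net t' = net t).card : ℝ) • x t := by
    rw [Finset.sum_congr rfl fun t' ht' => hx t' t (Finset.mem_filter.mp ht').2,
      Finset.sum_const, Nat.cast_smul_eq_nsmul]
  -- The net of `t` contains `t`, so the inverse of its cardinality is a genuine one.
  have hcard : ((univ.filter fun t' => net t' = net t).card : ℝ) ≠ 0 :=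
    Nat.cast_ne_zero.mpr (Finset.card_ne_zero_of_mem (a := t) (by simp))
  rw [netAvg, hsum, inv_smul_smul₀ hcard]

/-- If `u^0` is constant on each net and `p^k, z^k, u^k` follow the ADMM iteration for the
OPSP, then `z^k = p^k − p̄^k` for every `k ≥ 1`, and consequently the ADMM dual residual
satisfies `ρ(z^k − z^{k−1}) = ρ((p^k − p̄^k) − (p^{k−1} − p̄^{k−1}))` for every `k ≥ 2`. -/
theorem stmt5 {𝒯 N : Type*} [Fintype 𝒯] [DecidableEq N]
    (net : 𝒯 → N) (hsurj : Function.Surjective net) (T : ℕ)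
    (ρ : ℝ) (hρ : 0 < ρ)
    (p z u : ℕ → 𝒯 → Fin T → ℝ)
    (hu0 : ∀ t t', net t = net t' → u 0 t = u 0 t')
    (hz : ∀ k t, z (k + 1) t =
      u k t + p (k + 1) t - netAvg net (u k) t - netAvg net (p (k + 1)) t)
    (hu : ∀ k t, u (k + 1) t = u k t + p (k + 1) t - z (k + 1) t) :
    (∀ k : ℕ, 1 ≤ k → ∀ t, z k t = p k t - netAvg net (p k) t) ∧
    (∀ k : ℕ, 2 ≤ k → ∀ t,
      ρ • (z k t - z (k - 1) t) =
        ρ • ((p k t - netAvg net (p k) t) - (p (k - 1) t - netAvg net (p (k - 1)) t))) := by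
  have hconst : ∀ k t t', net t = net t' → u k t = u k t' := by
    intro k
    cases k with
    | zero => exact hu0
    | succ k =>
      -- The updates combine to `u (k + 1) = netAvg (u k) + netAvg (p (k + 1))`.
      have key : ∀ t, u (k + 1) t = netAvg net (u k) t + netAvg net (p (k + 1)) t := by
        intro t
        rw [hu, hz]
        abel
      intro t t' h
      rw [key, key, netAvg_congr net _ h, netAvg_congr net _ h]
  have hmain : ∀ k : ℕ, 1 ≤ k → ∀ t, z k t = p k t - netAvg net (p k) t := by
    intro k hk t
    obtain ⟨j, rfl⟩ := Nat.exists_eq_add_of_le' hk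
    rw [hz, netAvg_of_const net (u j) (hconst j)]
    abel
  refine ⟨hmain, fun k hk t => ?_⟩
  rw [hmain k (by omega), hmain (k - 1) (by omega)]
end
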